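/- Let d = 2m ≥ 4 be an even integer, let J be the canonical d×d symplectic form, and let A be any d×d complex matrix. Then the entrywise (Bochner) integral over the Haar probability measure on the real orthogonal group O(d) satisfies ∫_{O(d)} (J Oᵀ J O) A (J Oᵀ J O)† dμ(O) = (tr(A)·I_d + J Aᵀ J)/(d−1), where the real matrix J Oᵀ J O is regarded as a complex matrix. -/

import Mathlib

/-!
Put `S(O) = Oᵀ J O`. It is real, antisymmetric and orthogonal, so the integrand is
`J · (S A S) · J` and only the second moments `E[S_ab S_cd]` are needed.

Since `O(d)` is compact, its Haar probability measure is also right invariant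
(`integral_mul_right_orthogonal`), hence the law of `S` is invariant under `S ↦ gᵀ S g` for every
orthogonal `g`. Two kinds of `g` suffice. Flipping the sign of one coordinate kills every moment in
which some index occurs an odd number of times (`moment_eq_zero`); exchanging two coordinates shows
that `E[S_ab²]` does not depend on `b ≠ a`. As the rows of `S` are unit vectors with `S_aa = 0`, this
common value is `1/(d-1)` (`moment_self`). Altogether
`E[S_ab S_cd] = (δ_ac δ_bd - δ_ad δ_bc)/(d-1)` (`moment_eq`), which contracts with `A` to
`E[S A S] = (Aᵀ - tr(A) I)/(d-1)`; conjugating by `J` and using `J² = -I` gives the result.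
-/

open MeasureTheory Matrix

/-- The entrywise (product) measurable structure on matrices. -/
instance matrixMeasurableSpace {m' n' α : Type*} [MeasurableSpace α] :
    MeasurableSpace (Matrix m' n' α) :=
  (inferInstance : MeasurableSpace (m' → n' → α))

/-- The canonical `2m × 2m` symplectic form `J = [[0, Iₘ],[−Iₘ, 0]]`. -/
noncomputable def sympJ (m : ℕ) (R : Type*) [Ring R] : Matrix (Fin (2 * m)) (Fin (2 * m)) R :=
  Matrix.reindex (finSumFinEquiv.trans (finCongr (two_mul m).symm))
    (finSumFinEquiv.trans (finCongr (two_mul m).symm))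
    (Matrix.fromBlocks 0 1 (-1) 0)

namespace DIIITwirl

instance borelSpace_matrix (n : ℕ) : BorelSpace (Matrix (Fin n) (Fin n) ℝ) :=
  inferInstanceAs (BorelSpace (Fin n → Fin n → ℝ))

/-! ### Haar measure on the orthogonal group -/

instance compactSpace_orthogonalGroup (n : ℕ) : CompactSpace (orthogonalGroup (Fin n) ℝ) := by
  refine isCompact_iff_compactSpace.1
    (?_ : IsCompact ((orthogonalGroup (Fin n) ℝ : Submonoid _) : Set (Matrix (Fin n) (Fin n) ℝ)))
  have hK : IsCompact (Set.pi Set.univ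
      (fun _ : Fin n => Set.pi Set.univ (fun _ : Fin n => Set.Icc (-1 : ℝ) 1))) :=
    isCompact_univ_pi fun _ => isCompact_univ_pi fun _ => isCompact_Icc
  refine IsCompact.of_isClosed_subset hK ?_ ?_
  · have : ((orthogonalGroup (Fin n) ℝ : Submonoid _) : Set (Matrix (Fin n) (Fin n) ℝ))
        = {M | M * Mᵀ = 1} := by
      ext M
      exact mem_orthogonalGroup_iff (Fin n) ℝ
    rw [this]
    exact isClosed_eq (by fun_prop) continuous_const
  · intro M hM i _ j _
    have := entry_norm_bound_of_unitary (𝕜 := ℝ) hM i j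
    rw [Real.norm_eq_abs, abs_le] at this
    exact this

variable {n : ℕ}

theorem integral_mul_right_orthogonal (μ : Measure (orthogonalGroup (Fin n) ℝ))
    [μ.IsHaarMeasure] [IsProbabilityMeasure μ] (g : orthogonalGroup (Fin n) ℝ)
    (f : orthogonalGroup (Fin n) ℝ → ℝ) : ∫ O, f (O * g) ∂μ = ∫ O, f O ∂μ := by
  have hmeas : Measurable (fun O : orthogonalGroup (Fin n) ℝ => O * g) :=
    (continuous_mul_const g).measurable
  have : IsProbabilityMeasure (μ.map (fun O => O * g)) :=
    Measure.isProbabilityMeasure_map hmeas.aemeasurable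
  -- The right translate is again a Haar probability measure, so uniqueness applies.
  have hmap : μ.map (fun O => O * g) = μ :=
    Measure.isHaarMeasure_eq_of_isProbabilityMeasure _ _
  have hemb : MeasurableEmbedding (fun O : orthogonalGroup (Fin n) ℝ => O * g) :=
    (Homeomorph.mulRight g).measurableEmbedding
  conv_rhs => rw [← hmap]
  rw [hemb.integral_map]

/-! ### Second moments of `Oᵀ K O` -/

/-- The conjugate `Oᵀ K O` of a real matrix `K` by an orthogonal matrix `O`. -/
def conj (K : Matrix (Fin n) (Fin n) ℝ) (O : orthogonalGroup (Fin n) ℝ) :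
    Matrix (Fin n) (Fin n) ℝ :=
  (O : Matrix (Fin n) (Fin n) ℝ)ᵀ * K * (O : Matrix (Fin n) (Fin n) ℝ)

theorem conj_mul (K : Matrix (Fin n) (Fin n) ℝ) (O g : orthogonalGroup (Fin n) ℝ) :
    conj K (O * g) = (g : Matrix (Fin n) (Fin n) ℝ)ᵀ * conj K O * g := by
  simp [conj, Matrix.mul_assoc, Matrix.transpose_mul]

theorem continuous_conj (K : Matrix (Fin n) (Fin n) ℝ) : Continuous (conj K) := by
  unfold conj
  fun_prop

theorem continuous_conj_apply (K : Matrix (Fin n) (Fin n) ℝ) (a b : Fin n) :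
    Continuous (fun O => conj K O a b) :=
  (continuous_conj K).matrix_elem a b

theorem conj_antisymm {K : Matrix (Fin n) (Fin n) ℝ} (hK : Kᵀ = -K)
    (O : orthogonalGroup (Fin n) ℝ) (a b : Fin n) : conj K O a b = -conj K O b a := by
  have h : (conj K O)ᵀ = -conj K O := by
    simp [conj, Matrix.transpose_mul, hK, Matrix.mul_assoc]
  have := congrFun (congrFun h b) a
  simpa using this

theorem conj_row_norm {K : Matrix (Fin n) (Fin n) ℝ} (hK1 : K * Kᵀ = 1)
    (O : orthogonalGroup (Fin n) ℝ) (a : Fin n) : ∑ b, conj K O a b * conj K O a b = 1 := by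
  have h1 : (O : Matrix (Fin n) (Fin n) ℝ) * (O : Matrix (Fin n) (Fin n) ℝ)ᵀ = 1 :=
    (mem_orthogonalGroup_iff (Fin n) ℝ).1 O.2
  have h2 : (O : Matrix (Fin n) (Fin n) ℝ)ᵀ * (O : Matrix (Fin n) (Fin n) ℝ) = 1 :=
    (mem_orthogonalGroup_iff' (Fin n) ℝ).1 O.2
  have h : conj K O * (conj K O)ᵀ = 1 := by
    calc conj K O * (conj K O)ᵀ
        = (O : Matrix (Fin n) (Fin n) ℝ)ᵀ * (K * ((O : Matrix (Fin n) (Fin n) ℝ)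
            * (O : Matrix (Fin n) (Fin n) ℝ)ᵀ) * Kᵀ) * O := by
          simp [conj, Matrix.transpose_mul, Matrix.mul_assoc]
      _ = 1 := by rw [h1, Matrix.mul_one, hK1, Matrix.mul_one, h2]
  have := congrFun (congrFun h a) a
  simpa [Matrix.mul_apply] using this

/-- The reflection negating the `k`-th coordinate. -/
def flip (k : Fin n) : orthogonalGroup (Fin n) ℝ :=
  ⟨diagonal (fun i => if i = k then -1 else 1), by
    rw [mem_orthogonalGroup_iff, diagonal_transpose, diagonal_mul_diagonal, ← diagonal_one]
    congr 1
    ext i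
    split_ifs <;> simp⟩

theorem conj_mul_flip (K : Matrix (Fin n) (Fin n) ℝ) (O : orthogonalGroup (Fin n) ℝ)
    (k a b : Fin n) : conj K (O * flip k) a b
      = (if a = k then -1 else 1) * conj K O a b * (if b = k then -1 else 1) := by
  rw [conj_mul]
  simp [flip, diagonal_mul, mul_diagonal]

/-- The permutation matrix of `σ`, as an orthogonal matrix. -/
def perm (σ : Equiv.Perm (Fin n)) : orthogonalGroup (Fin n) ℝ :=
  ⟨(1 : Matrix (Fin n) (Fin n) ℝ).submatrix id σ, by
    rw [mem_orthogonalGroup_iff, transpose_submatrix, transpose_one, submatrix_mul_equiv]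
    simp⟩

theorem conj_mul_perm (K : Matrix (Fin n) (Fin n) ℝ) (O : orthogonalGroup (Fin n) ℝ)
    (σ : Equiv.Perm (Fin n)) (a b : Fin n) :
    conj K (O * perm σ) a b = conj K O (σ a) (σ b) := by
  rw [conj_mul]
  simp [perm, Matrix.mul_apply, Matrix.one_apply]

/-- The second moment `E[S_ab S_cd]` of `S = Oᵀ K O`. -/
noncomputable def moment (μ : Measure (orthogonalGroup (Fin n) ℝ))
    (K : Matrix (Fin n) (Fin n) ℝ) (a b c d : Fin n) : ℝ :=
  ∫ O, conj K O a b * conj K O c d ∂μ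

variable (μ : Measure (orthogonalGroup (Fin n) ℝ)) {K : Matrix (Fin n) (Fin n) ℝ}

theorem moment_swap_left (hK : Kᵀ = -K) (a b c d : Fin n) :
    moment μ K a b c d = -moment μ K b a c d := by
  rw [moment, moment, ← integral_neg]
  congr 1
  ext O
  rw [conj_antisymm hK O a b]
  ring

theorem moment_swap_right (hK : Kᵀ = -K) (a b c d : Fin n) :
    moment μ K a b c d = -moment μ K a b d c := by
  rw [moment, moment, ← integral_neg]
  congr 1
  ext O
  rw [conj_antisymm hK O c d]
  ring

variable [μ.IsHaarMeasure]

theorem integrable_conj_mul_conj (a b c d : Fin n) :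
    Integrable (fun O => conj K O a b * conj K O c d) μ :=
  ((continuous_conj_apply K a b).mul
    (continuous_conj_apply K c d)).integrable_of_hasCompactSupport
      (HasCompactSupport.of_compactSpace _)

variable [IsProbabilityMeasure μ]

/-- A moment vanishes if the index `a` occurs exactly once in it: reflect the coordinate `a`. -/
theorem moment_eq_zero {a b c d : Fin n} (hb : b ≠ a) (hc : c ≠ a) (hd : d ≠ a) :
    moment μ K a b c d = 0 := by
  have h := integral_mul_right_orthogonal μ (flip a)
    (fun O => conj K O a b * conj K O c d)
  simp only [conj_mul_flip, hb, hc, hd, if_true, if_false] at h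
  have h' : -moment μ K a b c d = moment μ K a b c d := by
    rw [moment, ← integral_neg, ← h]
    congr 1
    ext O
    ring
  linarith

theorem moment_self (hK : Kᵀ = -K) (hK1 : K * Kᵀ = 1) {a b : Fin n} (hab : a ≠ b) :
    moment μ K a b a b = ((n : ℝ) - 1)⁻¹ := by
  have hconst : ∀ b' ∈ Finset.univ.erase a, moment μ K a b' a b' = moment μ K a b a b := by
    intro b' hb'
    have hb' : b' ≠ a := Finset.ne_of_mem_erase hb'
    have h := integral_mul_right_orthogonal μ (perm (Equiv.swap b b'))
      (fun O => conj K O a b * conj K O a b)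
    simp only [conj_mul_perm, Equiv.swap_apply_left,
      Equiv.swap_apply_of_ne_of_ne hab hb'.symm] at h
    exact h
  have haa : moment μ K a a a a = 0 := by
    have := moment_swap_left μ hK a a a a
    linarith
  have hsum : ∑ b', moment μ K a b' a b' = 1 := by
    unfold moment
    rw [← integral_finsetSum _ (fun b' _ => integrable_conj_mul_conj μ a b' a b')]
    simp [conj_row_norm hK1]
  rw [← Finset.add_sum_erase _ _ (Finset.mem_univ a), haa, Finset.sum_congr rfl hconst,
    Finset.sum_const, Finset.card_erase_of_mem (Finset.mem_univ a), Finset.card_univ,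
    Fintype.card_fin, nsmul_eq_mul, Nat.cast_sub (by have := a.2; omega), Nat.cast_one,
    zero_add] at hsum
  exact eq_inv_of_mul_eq_one_right hsum

theorem moment_eq (hK : Kᵀ = -K) (hK1 : K * Kᵀ = 1) (a b c d : Fin n) :
    moment μ K a b c d = ((n : ℝ) - 1)⁻¹ *
      ((if a = c then 1 else 0) * (if b = d then 1 else 0)
        - (if a = d then 1 else 0) * (if b = c then 1 else 0)) := by
  by_cases hab : a = b
  · subst hab
    have h0 := moment_swap_left μ hK a a c d
    have : moment μ K a a c d = 0 := by linarith
    rw [this]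
    ring
  by_cases hcd : c = d
  · subst hcd
    have h0 := moment_swap_right μ hK a b c c
    have : moment μ K a b c c = 0 := by linarith
    rw [this]
    ring
  by_cases hac : a = c
  · subst hac
    by_cases hbd : b = d
    · subst hbd
      rw [moment_self μ hK hK1 hab]
      simp [hab]
    · rw [moment_swap_left μ hK, moment_eq_zero μ hab hab (Ne.symm hbd)]
      simp [hbd, hcd]
  by_cases had : a = d
  · subst had
    by_cases hbc : b = c
    · subst hbc
      rw [moment_swap_right μ hK, moment_self μ hK hK1 hab]
      simp [hab]
    · rw [moment_swap_left μ hK, moment_eq_zero μ hab (Ne.symm hbc) hab]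
      simp [hac, hbc]
  rw [moment_eq_zero μ (Ne.symm hab) (Ne.symm hac) (Ne.symm had)]
  simp [hac, had]

/-- Contracting the second moments with `A` gives `E[S A S] = (Aᵀ - tr(A) I)/(n-1)`. -/
theorem integral_conj_twirl (hK : Kᵀ = -K) (hK1 : K * Kᵀ = 1)
    (A : Matrix (Fin n) (Fin n) ℂ) (p s : Fin n) :
    Integrable (fun O => ((conj K O).map (Complex.ofReal ·) * A *
        (conj K O).map (Complex.ofReal ·)) p s) μ ∧
    ∫ O, ((conj K O).map (Complex.ofReal ·) * A * (conj K O).map (Complex.ofReal ·)) p s ∂μ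
      = (((n : ℂ) - 1)⁻¹ • (Aᵀ - A.trace • (1 : Matrix (Fin n) (Fin n) ℂ))) p s := by
  have hexp : ∀ O, ((conj K O).map (Complex.ofReal ·) * A *
      (conj K O).map (Complex.ofReal ·)) p s
      = ∑ r, ∑ q, A q r * ((conj K O p q * conj K O r s : ℝ) : ℂ) := by
    intro O
    simp only [Matrix.mul_apply, Matrix.map_apply, Finset.sum_mul]
    refine Finset.sum_congr rfl fun r _ => Finset.sum_congr rfl fun q _ => ?_
    push_cast
    ring
  simp only [hexp]
  have hint : ∀ q r, Integrable
      (fun O => A q r * ((conj K O p q * conj K O r s : ℝ) : ℂ)) μ :=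
    fun q r => ((integrable_conj_mul_conj μ p q r s).ofReal).const_mul _
  refine ⟨integrable_finsetSum _ fun r _ => integrable_finsetSum _ fun q _ => hint q r, ?_⟩
  rw [integral_finsetSum _ fun r _ => integrable_finsetSum _ fun q _ => hint q r]
  have hval : ∀ q r, ∫ O, A q r * ((conj K O p q * conj K O r s : ℝ) : ℂ) ∂μ
      = ((n : ℂ) - 1)⁻¹ * ((if p = r then 1 else 0) * (if q = s then 1 else 0) * A q r
        - (if p = s then 1 else 0) * ((if q = r then 1 else 0) * A q r)) := by
    intro q r
    rw [integral_const_mul, integral_complex_ofReal]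
    change A q r * ((moment μ K p q r s : ℝ) : ℂ) = _
    rw [moment_eq μ hK hK1]
    push_cast [apply_ite Complex.ofReal]
    ring
  simp only [integral_finsetSum _ fun q _ => hint q _, hval]
  simp only [← Finset.mul_sum, Finset.sum_sub_distrib]
  simp [Matrix.trace, Matrix.one_apply, mul_comm]

/-! ### The symplectic form -/

theorem sympJ_transpose (m : ℕ) (R : Type*) [Ring R] : (sympJ m R)ᵀ = -sympJ m R := by
  simp only [sympJ, reindex_apply, transpose_submatrix, fromBlocks_transpose, transpose_zero,
    transpose_one, transpose_neg]
  ext i j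
  rw [neg_apply, submatrix_apply, submatrix_apply, ← neg_apply, fromBlocks_neg]
  simp

theorem sympJ_mul_self (m : ℕ) (R : Type*) [Ring R] : sympJ m R * sympJ m R = -1 := by
  simp only [sympJ, reindex_apply, submatrix_mul_equiv, fromBlocks_multiply]
  have : fromBlocks (-1) 0 0 (-1) = (-1 : Matrix (Fin m ⊕ Fin m) (Fin m ⊕ Fin m) R) := by
    rw [← fromBlocks_one, fromBlocks_neg]
    simp
  rw [show fromBlocks _ _ _ _ = (-1 : Matrix (Fin m ⊕ Fin m) (Fin m ⊕ Fin m) R) by simpa using this]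
  ext i j
  rw [submatrix_apply, Matrix.neg_apply, Matrix.neg_apply, one_apply, one_apply]
  simp only [EmbeddingLike.apply_eq_iff_eq]

theorem sympJ_map (m : ℕ) : (sympJ m ℝ).map (Complex.ofReal ·) = sympJ m ℂ := by
  simp only [sympJ, reindex_apply, ← submatrix_map, fromBlocks_map]
  congr 2
  all_goals ext i j; simp [Matrix.one_apply, apply_ite Complex.ofReal]

/-- As `Jᵀ = -J` and `S = Oᵀ J O` is antisymmetric, the integrand is `J (S A S) J`. -/
theorem integrand_eq (m : ℕ) (A : Matrix (Fin (2 * m)) (Fin (2 * m)) ℂ)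
    (O : orthogonalGroup (Fin (2 * m)) ℝ) :
    ((sympJ m ℝ * (O : Matrix (Fin (2 * m)) (Fin (2 * m)) ℝ)ᵀ * sympJ m ℝ *
              (O : Matrix (Fin (2 * m)) (Fin (2 * m)) ℝ)).map (Complex.ofReal ·)) * A *
          ((sympJ m ℝ * (O : Matrix (Fin (2 * m)) (Fin (2 * m)) ℝ)ᵀ * sympJ m ℝ *
              (O : Matrix (Fin (2 * m)) (Fin (2 * m)) ℝ)).map (Complex.ofReal ·))ᴴ
      = sympJ m ℂ * ((conj (sympJ m ℝ) O).map (Complex.ofReal ·) * A *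
          (conj (sympJ m ℝ) O).map (Complex.ofReal ·)) * sympJ m ℂ := by
  have h1 : sympJ m ℝ * (O : Matrix (Fin (2 * m)) (Fin (2 * m)) ℝ)ᵀ * sympJ m ℝ *
      (O : Matrix (Fin (2 * m)) (Fin (2 * m)) ℝ) = sympJ m ℝ * conj (sympJ m ℝ) O := by
    simp [conj, Matrix.mul_assoc]
  have h2 : (sympJ m ℝ * conj (sympJ m ℝ) O).map (Complex.ofReal ·)
      = sympJ m ℂ * (conj (sympJ m ℝ) O).map (Complex.ofReal ·) := by
    rw [← sympJ_map]
    exact Matrix.map_mul (f := Complex.ofRealHom)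
  have h3 : ((conj (sympJ m ℝ) O).map (Complex.ofReal ·))ᴴ
      = -(conj (sympJ m ℝ) O).map (Complex.ofReal ·) := by
    ext a b
    have := conj_antisymm (sympJ_transpose m ℝ) O b a
    simp [this]
  have h4 : (sympJ m ℂ)ᴴ = -sympJ m ℂ := by
    rw [← sympJ_map]
    ext a b
    have := congrFun (congrFun (sympJ_transpose m ℝ) a) b
    simp only [transpose_apply] at this
    simp [this]
  rw [h1, h2, conjTranspose_mul, h3, h4]
  simp [Matrix.mul_assoc]

end DIIITwirl

open DIIITwirl

/-- For any `d × d` complex matrix `A` with `d = 2m ≥ 4` even and `J` the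
canonical symplectic form, the entrywise Haar average over the real orthogonal group `O(d)` of
`(J Oᵀ J O) A (J Oᵀ J O)†` (the real matrix `J Oᵀ J O` being regarded as complex) equals
`(tr(A)·𝟙 + J Aᵀ J)/(d−1)`. -/
theorem haar_orthogonal_DIII_twirl
    (m : ℕ) (hm : 2 ≤ m) (A : Matrix (Fin (2 * m)) (Fin (2 * m)) ℂ)
    (μ : Measure (Matrix.orthogonalGroup (Fin (2 * m)) ℝ))
    [μ.IsHaarMeasure] [IsProbabilityMeasure μ]
    (i j : Fin (2 * m)) :
    (∫ O : Matrix.orthogonalGroup (Fin (2 * m)) ℝ,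
        (((sympJ m ℝ * (O : Matrix (Fin (2 * m)) (Fin (2 * m)) ℝ)ᵀ * sympJ m ℝ *
              (O : Matrix (Fin (2 * m)) (Fin (2 * m)) ℝ)).map (Complex.ofReal ·)) * A *
          ((sympJ m ℝ * (O : Matrix (Fin (2 * m)) (Fin (2 * m)) ℝ)ᵀ * sympJ m ℝ *
              (O : Matrix (Fin (2 * m)) (Fin (2 * m)) ℝ)).map (Complex.ofReal ·))ᴴ) i j ∂μ)
      = (((2 * (m : ℂ) - 1)⁻¹ •
          (A.trace • (1 : Matrix (Fin (2 * m)) (Fin (2 * m)) ℂ) + sympJ m ℂ * Aᵀ * sympJ m ℂ)) i j) := by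
  have hK := sympJ_transpose m ℝ
  have hK1 : sympJ m ℝ * (sympJ m ℝ)ᵀ = 1 := by
    rw [hK, Matrix.mul_neg, sympJ_mul_self, neg_neg]
  have hN := integral_conj_twirl μ hK hK1 A
  simp only [integrand_eq]
  have hexp : ∀ (N : Matrix (Fin (2 * m)) (Fin (2 * m)) ℂ), (sympJ m ℂ * N * sympJ m ℂ) i j
      = ∑ s, ∑ p, sympJ m ℂ i p * sympJ m ℂ s j * N p s := by
    intro N
    rw [Matrix.mul_apply]
    refine Finset.sum_congr rfl fun s _ => ?_
    rw [Matrix.mul_apply, Finset.sum_mul]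
    exact Finset.sum_congr rfl fun p _ => by ring
  have hint : ∀ p s, Integrable (fun O => sympJ m ℂ i p * sympJ m ℂ s j *
      ((conj (sympJ m ℝ) O).map (Complex.ofReal ·) * A *
          (conj (sympJ m ℝ) O).map (Complex.ofReal ·)) p s) μ :=
    fun p s => (hN p s).1.const_mul _
  simp only [hexp]
  rw [integral_finsetSum _ fun s _ => integrable_finsetSum _ fun p _ => hint p s]
  simp only [integral_finsetSum _ fun p _ => hint p _, integral_const_mul, (hN _ _).2]
  rw [← hexp]
  push_cast
  rw [Matrix.mul_smul, Matrix.smul_mul, Matrix.mul_sub, Matrix.sub_mul, Matrix.mul_smul,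
    Matrix.mul_one, Matrix.smul_mul, sympJ_mul_self, smul_neg, sub_neg_eq_add, add_comm]
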